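/- Let (G,f) be an admissible pair. If (G,f) is divergence-subadditive, then (G,f) is information-subadditive: for all finite sets X, Y, Z, every pmf p_X on X, every channel p_{Y|X} from X to Y and every channel p_{Z|X} from X to Z (so that Y → X → Z forms a Markov chain), one has I_{G,f}(p_X, p_{YZ|X}) ≤ I_{G,f}(p_X, p_{Y|X}) + I_{G,f}(p_X, p_{Z|X}), where p_{YZ|X}(y,z|x) = p_{Y|X}(y|x) p_{Z|X}(z|x). -/

import Mathlib

open scoped BigOperators

/-- A probability mass function on a finite type: nonnegative and summing to 1. -/
def IsPMF {X : Type*} [Fintype X] (p : X → ℝ) : Prop :=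
  (∀ x, 0 ≤ p x) ∧ ∑ x, p x = 1

/-- Absolute continuity `p ≪ q`: `q x = 0` implies `p x = 0`. -/
def AbsCont {X : Type*} (p q : X → ℝ) : Prop :=
  ∀ x, q x = 0 → p x = 0

/-- The f-divergence `D_f(p‖q) = ∑_{x : q(x) > 0} q(x) f(p(x)/q(x))`. -/
noncomputable def fDiv {X : Type*} [Fintype X] (f : ℝ → ℝ) (p q : X → ℝ) : ℝ :=
  ∑ x, if 0 < q x then q x * f (p x / q x) else 0

/-- `D_m(f) = f 0 + lim_{t→∞} f t / t`, as an extended real.  For a convex `f`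
with `f 1 = 0` the limit equals the supremum of the slopes `f t / (t-1)` over `t > 1`. -/
noncomputable def Dm (f : ℝ → ℝ) : EReal :=
  (f 0 : EReal) + ⨆ t : {t : ℝ // 1 < t}, ((f t.1 / (t.1 - 1) : ℝ) : EReal)

/-- An admissible pair `(G, f)`: `f` is convex on `[0,∞)` with `f 1 = 0`, and
`G : [0, D_m(f)) → [0,∞)` is non-decreasing with `G 0 = 0`. -/
def Admissible (G f : ℝ → ℝ) : Prop :=
  ConvexOn ℝ (Set.Ici 0) f ∧ f 1 = 0 ∧ G 0 = 0 ∧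
    (∀ a b : ℝ, 0 ≤ a → a ≤ b → (b : EReal) < Dm f → G a ≤ G b) ∧
    (∀ a : ℝ, 0 ≤ a → (a : EReal) < Dm f → 0 ≤ G a)

/-- The `(G,f)`-information `I_{G,f}(p_X, p_{Y|X})`: the infimum over output pmfs
`q_Y` (with `p_{Y|X=x} ≪ q_Y` for all `x`) of `∑_x p_X x • G (D_f(p_{Y|X=x}‖q_Y))`. -/
noncomputable def Igf {X Y : Type*} [Fintype X] [Fintype Y]
    (G f : ℝ → ℝ) (pX : X → ℝ) (W : X → Y → ℝ) : ℝ :=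
  sInf {v : ℝ | ∃ qY : Y → ℝ, IsPMF qY ∧ (∀ x, AbsCont (W x) qY) ∧
    v = ∑ x, pX x * G (fDiv f (W x) qY)}

/-- `(G,f)` is divergence-subadditive: for all finite alphabets and pmfs
`q_Y ≪ r_Y`, `q_Z ≪ r_Z`, one has
`G(D_f(q_Y⊗q_Z‖r_Y⊗r_Z)) ≤ G(D_f(q_Y‖r_Y)) + G(D_f(q_Z‖r_Z))`. -/
def DivSubadditive (G f : ℝ → ℝ) : Prop :=
  ∀ (Y Z : Type) [Fintype Y] [Fintype Z] (qY rY : Y → ℝ) (qZ rZ : Z → ℝ),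
    IsPMF qY → IsPMF rY → IsPMF qZ → IsPMF rZ →
    AbsCont qY rY → AbsCont qZ rZ →
    G (fDiv f (fun p : Y × Z => qY p.1 * qZ p.2) (fun p : Y × Z => rY p.1 * rZ p.2)) ≤
      G (fDiv f qY rY) + G (fDiv f qZ rZ)

/-- `(G,f)` is information-subadditive: for every pmf `p_X` and channels
`p_{Y|X}`, `p_{Z|X}` (so that `Y → X → Z` is a Markov chain),
`I_{G,f}(X;YZ) ≤ I_{G,f}(X;Y) + I_{G,f}(X;Z)`. -/
def InfoSubadditive (G f : ℝ → ℝ) : Prop :=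
  ∀ (X Y Z : Type) [Fintype X] [Fintype Y] [Fintype Z]
    (pX : X → ℝ) (W : X → Y → ℝ) (V : X → Z → ℝ),
    IsPMF pX → (∀ x, IsPMF (W x)) → (∀ x, IsPMF (V x)) →
    Igf G f pX (fun x (p : Y × Z) => W x p.1 * V x p.2) ≤
      Igf G f pX W + Igf G f pX V

/-!
If `qY` and `qZ` are feasible in the infima for `Y` and for `Z`, then `qY ⊗ qZ` is feasible in
the infimum for `(Y, Z)`. Applying divergence-subadditivity for each input letter `x` and averaging
over `pX` bounds the joint information by the sum of the two objectives, and one then takes infima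
over `qY` and `qZ`.

Feasible points bound the joint infimum from above only if its objective is bounded below, since
`sInf` takes the junk value `0` on unbounded sets. For an admissible pair `G ∘ D_f` is nonnegative:
`D_f ≥ 0` by Jensen, and if `p ≤ T q` with `T > 1`, bounding `f` by its chord over `[0, T]` gives
`D_f(p‖q) ≤ (1 - 1/T) (f 0 + f T / (T - 1))`, so that a positive divergence lies strictly below
`D_m(f)`, inside the domain of `G`.
-/

section Pmf

variable {X Y Z : Type*} [Fintype X] [Fintype Y] [Fintype Z]

theorem IsPMF.nonempty {p : X → ℝ} (hp : IsPMF p) : Nonempty X := by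
  have hsum : ∑ x, p x ≠ 0 := hp.2 ▸ one_ne_zero
  exact Finset.univ_nonempty_iff.1 (Finset.nonempty_of_sum_ne_zero hsum)

theorem IsPMF.prod {p : Y → ℝ} {q : Z → ℝ} (hp : IsPMF p) (hq : IsPMF q) :
    IsPMF fun yz : Y × Z => p yz.1 * q yz.2 := by
  refine ⟨fun yz => mul_nonneg (hp.1 yz.1) (hq.1 yz.2), ?_⟩
  rw [Fintype.sum_prod_type, ← Fintype.sum_mul_sum, hp.2, hq.2, one_mul]

theorem exists_isPMF_forall_pos [Nonempty X] : ∃ q : X → ℝ, IsPMF q ∧ ∀ x, 0 < q x := by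
  refine ⟨fun _ => (Fintype.card X : ℝ)⁻¹, ⟨fun _ => by positivity, ?_⟩, fun _ => by positivity⟩
  simp

end Pmf

section AbsCont

theorem AbsCont.prod {Y Z : Type*} {p q : Y → ℝ} {r s : Z → ℝ} (hpq : AbsCont p q)
    (hrs : AbsCont r s) :
    AbsCont (fun yz : Y × Z => p yz.1 * r yz.2) (fun yz : Y × Z => q yz.1 * s yz.2) :=
  fun yz hyz => mul_eq_zero.2 ((mul_eq_zero.1 hyz).imp (hpq yz.1) (hrs yz.2))

theorem AbsCont.exists_one_lt_forall_le_mul {X : Type*} [Finite X] {p q : X → ℝ}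
    (hpq : AbsCont p q) (hq : ∀ x, 0 ≤ q x) : ∃ T : ℝ, 1 < T ∧ ∀ x, p x ≤ T * q x := by
  obtain ⟨M, hM⟩ := (Set.finite_range fun x => p x / q x).bddAbove
  refine ⟨max M 2, one_lt_two.trans_le (le_max_right M 2), fun x => ?_⟩
  calc p x = p x / q x * q x := (div_mul_cancel_of_imp (hpq x)).symm
    _ ≤ max M 2 * q x :=
      mul_le_mul_of_nonneg_right ((hM (Set.mem_range_self x)).trans (le_max_left M 2)) (hq x)

end AbsCont

section Divergence

variable {X : Type*} [Fintype X] {f : ℝ → ℝ} {p q : X → ℝ}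

theorem fDiv_eq_sum (f : ℝ → ℝ) (p : X → ℝ) (hq : ∀ x, 0 ≤ q x) :
    fDiv f p q = ∑ x, q x * f (p x / q x) := by
  refine Finset.sum_congr rfl fun x _ => ?_
  rcases (hq x).eq_or_lt with hx | hx
  · simp [← hx]
  · exact if_pos hx

theorem map_sum_le_fDiv (hf : ConvexOn ℝ (Set.Ici 0) f) (hp : ∀ x, 0 ≤ p x) (hq : IsPMF q)
    (hpq : AbsCont p q) : f (∑ x, p x) ≤ fDiv f p q := by
  have hJensen := hf.map_sum_le (fun x _ => hq.1 x) hq.2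
    (fun x _ => div_nonneg (hp x) (hq.1 x))
  simpa only [smul_eq_mul, mul_div_cancel_of_imp' (hpq _), ← fDiv_eq_sum f p hq.1] using hJensen

theorem fDiv_nonneg (hf : ConvexOn ℝ (Set.Ici 0) f) (hf1 : f 1 = 0) (hp : IsPMF p)
    (hq : IsPMF q) (hpq : AbsCont p q) : 0 ≤ fDiv f p q := by
  simpa only [hp.2, hf1] using map_sum_le_fDiv hf hp.1 hq hpq

theorem mul_map_div_le_chord (hf : ConvexOn ℝ (Set.Ici 0) f) {a b T : ℝ} (ha : 0 ≤ a)
    (hb : 0 < b) (hT : 0 < T) (hab : a ≤ T * b) :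
    b * f (a / b) ≤ (b - a / T) * f 0 + a / T * f T := by
  have hw : a / b / T ≤ 1 := by rwa [div_div, mul_comm, div_le_one (by positivity)]
  have hchord : f (a / b) ≤ (1 - a / b / T) * f 0 + a / b / T * f T := by
    simpa [hT.ne'] using
      hf.2 Set.self_mem_Ici hT.le (sub_nonneg.2 hw) (by positivity) (sub_add_cancel 1 _)
  calc b * f (a / b) ≤ b * ((1 - a / b / T) * f 0 + a / b / T * f T) := by gcongr
    _ = (b - a / T) * f 0 + a / T * f T := by field_simp

theorem fDiv_le_chord (hf : ConvexOn ℝ (Set.Ici 0) f) (hp : ∀ x, 0 ≤ p x) (hq : ∀ x, 0 ≤ q x)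
    {T : ℝ} (hT : 0 < T) (hpq : ∀ x, p x ≤ T * q x) :
    fDiv f p q ≤ (∑ x, q x - (∑ x, p x) / T) * f 0 + (∑ x, p x) / T * f T := by
  have hterm (x : X) : q x * f (p x / q x) ≤ (q x - p x / T) * f 0 + p x / T * f T := by
    rcases (hq x).eq_or_lt with hqx | hqx
    · have hpx : p x = 0 := le_antisymm (by simpa [← hqx] using hpq x) (hp x)
      simp [← hqx, hpx]
    · exact mul_map_div_le_chord hf (hp x) hqx hT (hpq x)
  calc fDiv f p q = ∑ x, q x * f (p x / q x) := fDiv_eq_sum f p hq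
    _ ≤ ∑ x, ((q x - p x / T) * f 0 + p x / T * f T) := Finset.sum_le_sum fun x _ => hterm x
    _ = _ := by
      simp only [Finset.sum_add_distrib, ← Finset.sum_mul, Finset.sum_sub_distrib, Finset.sum_div]

theorem coe_add_div_le_Dm (f : ℝ → ℝ) {t : ℝ} (ht : 1 < t) :
    ((f 0 + f t / (t - 1) : ℝ) : EReal) ≤ Dm f := by
  rw [EReal.coe_add, Dm]
  gcongr
  exact le_iSup (fun t : {t : ℝ // 1 < t} => ((f t.1 / (t.1 - 1) : ℝ) : EReal)) ⟨t, ht⟩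

theorem fDiv_lt_Dm (hf : ConvexOn ℝ (Set.Ici 0) f) (hp : IsPMF p) (hq : IsPMF q)
    (hpq : AbsCont p q) (hpos : 0 < fDiv f p q) : (fDiv f p q : EReal) < Dm f := by
  obtain ⟨T, hT, hle⟩ := hpq.exists_one_lt_forall_le_mul hq.1
  have hT0 : 0 < T := one_pos.trans hT
  have hT1 : 0 < T - 1 := sub_pos.2 hT
  have hchord : fDiv f p q ≤ (T - 1) / T * (f 0 + f T / (T - 1)) := by
    calc fDiv f p q ≤ (1 - 1 / T) * f 0 + 1 / T * f T := by
          simpa only [hp.2, hq.2] using fDiv_le_chord hf hp.1 hq.1 hT0 hle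
      _ = (T - 1) / T * (f 0 + f T / (T - 1)) := by field_simp
  have hslope : 0 < f 0 + f T / (T - 1) :=
    pos_of_mul_pos_right (hpos.trans_le hchord) (by positivity)
  have hlt : fDiv f p q < f 0 + f T / (T - 1) :=
    hchord.trans_lt (mul_lt_of_lt_one_left hslope ((div_lt_one hT0).2 (sub_one_lt T)))
  exact (EReal.coe_lt_coe_iff.2 hlt).trans_le (coe_add_div_le_Dm f hT)

theorem Admissible.map_fDiv_nonneg {G : ℝ → ℝ} (hGf : Admissible G f) (hp : IsPMF p)
    (hq : IsPMF q) (hpq : AbsCont p q) : 0 ≤ G (fDiv f p q) := by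
  obtain ⟨hf, hf1, hG0, -, hG⟩ := hGf
  -- `D_m(f)` may be `0`, so a vanishing divergence need not lie in the domain `[0, D_m(f))`.
  rcases (fDiv_nonneg hf hf1 hp hq hpq).eq_or_lt with hzero | hpos
  · rw [← hzero, hG0]
  · exact hG _ hpos.le (fDiv_lt_Dm hf hp hq hpq hpos)

end Divergence

section Information

variable {X Y : Type*} [Fintype X] [Fintype Y] {G f : ℝ → ℝ} {pX : X → ℝ} {W : X → Y → ℝ}

theorem Igf_le_sum (hpX : ∀ x, 0 ≤ pX x)
    (hG : ∀ x (q : Y → ℝ), IsPMF q → AbsCont (W x) q → 0 ≤ G (fDiv f (W x) q))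
    {q : Y → ℝ} (hq : IsPMF q) (hWq : ∀ x, AbsCont (W x) q) :
    Igf G f pX W ≤ ∑ x, pX x * G (fDiv f (W x) q) := by
  refine csInf_le ⟨0, ?_⟩ ⟨q, hq, hWq, rfl⟩
  rintro _ ⟨r, hr, hWr, rfl⟩
  exact Finset.sum_nonneg fun x _ => mul_nonneg (hpX x) (hG x r hr (hWr x))

theorem le_Igf [Nonempty Y] {c : ℝ}
    (hc : ∀ q : Y → ℝ, IsPMF q → (∀ x, AbsCont (W x) q) →
      c ≤ ∑ x, pX x * G (fDiv f (W x) q)) :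
    c ≤ Igf G f pX W := by
  obtain ⟨u, hu, hupos⟩ := exists_isPMF_forall_pos (X := Y)
  refine le_csInf ⟨_, u, hu, fun x y huy => absurd huy (hupos y).ne', rfl⟩ ?_
  rintro _ ⟨q, hq, hWq, rfl⟩
  exact hc q hq hWq

end Information

theorem divSubadditive_implies_infoSubadditive_general (G f : ℝ → ℝ)
    (hG : ∀ (Y : Type) [Fintype Y] (p q : Y → ℝ), IsPMF p → IsPMF q → AbsCont p q →
      0 ≤ G (fDiv f p q))
    (h : DivSubadditive G f) : InfoSubadditive G f := by
  intro X Y Z _ _ _ pX W V hpX hW hV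
  obtain ⟨x₀⟩ := hpX.nonempty
  have := (hW x₀).nonempty
  have := (hV x₀).nonempty
  rw [← sub_le_iff_le_add]
  refine le_Igf fun qY hqY hWq => ?_
  rw [sub_le_comm]
  refine le_Igf fun qZ hqZ hVq => ?_
  rw [sub_le_iff_le_add']
  calc Igf G f pX (fun x (yz : Y × Z) => W x yz.1 * V x yz.2)
      ≤ ∑ x, pX x * G (fDiv f (fun yz : Y × Z => W x yz.1 * V x yz.2)
          fun yz : Y × Z => qY yz.1 * qZ yz.2) :=
        Igf_le_sum hpX.1 (fun x q => hG (Y × Z) _ q ((hW x).prod (hV x))) (hqY.prod hqZ)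
          fun x => (hWq x).prod (hVq x)
    _ ≤ ∑ x, pX x * (G (fDiv f (W x) qY) + G (fDiv f (V x) qZ)) :=
        Finset.sum_le_sum fun x _ => mul_le_mul_of_nonneg_left
          (h Y Z (W x) qY (V x) qZ (hW x) hqY (hV x) hqZ (hWq x) (hVq x)) (hpX.1 x)
    _ = _ := by simp only [mul_add, Finset.sum_add_distrib]

/-- For an admissible pair, divergence-subadditivity implies information-subadditivity. -/
theorem divSubadditive_implies_infoSubadditive (G f : ℝ → ℝ)
    (hGf : Admissible G f) (h : DivSubadditive G f) :
    InfoSubadditive G f :=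
  divSubadditive_implies_infoSubadditive_general G f
    (fun _ _ _ _ hp hq hpq => hGf.map_fDiv_nonneg hp hq hpq) h
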